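/- Let 0 < σ < 1, let P be a real homogeneous polynomial of even degree 2k in n variables with P ≠ 0, and let ε be a nonzero real number with |ε| ≤ K(σ,P)⁻¹. Then the probability measure μ on ℝⁿ with density f(·;ε,σ,P) is not Gaussian: there is no mean vector m ∈ ℝⁿ and positive semidefinite matrix Σ such that the characteristic function of μ equals t ↦ exp(i mᵀt − tᵀΣt/2); equivalently, Φ(t;ε,σ,P) = e^{-|t|²/2} + ε e^{-σ²|t|²/2} P(t) is not the characteristic function of any Gaussian measure on ℝⁿ. -/

import Mathlib

open MeasureTheory Real ProbabilityTheory

noncomputable def hermiteR (m : ℕ) (x : ℝ) : ℝ :=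
  Polynomial.aeval x (Polynomial.hermite m)

noncomputable def renorm {n : ℕ} (P : MvPolynomial (Fin n) ℝ) (x : Fin n → ℝ) : ℝ :=
  ∑ m ∈ P.support, P.coeff m * ∏ i, hermiteR (m i) (x i)

noncomputable def Kconst (n k : ℕ) (σ : ℝ) (P : MvPolynomial (Fin n) ℝ) : ℝ :=
  ⨆ x : Fin n → ℝ, (σ ^ (n + 2*k))⁻¹ * |renorm P x| * Real.exp (-(1 - σ^2) * (∑ i, x i ^ 2) / 2)

noncomputable def fdens (n k : ℕ) (σ ε : ℝ) (P : MvPolynomial (Fin n) ℝ) (x : Fin n → ℝ) : ℝ :=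
  (2*π)^(-(n:ℝ)/2) * Real.exp (-(∑ i, x i ^ 2)/2) *
    (1 + (-1)^k * ε * (σ^(n+2*k))⁻¹ * renorm P (fun i => x i / σ) *
      Real.exp (-(1-σ^2) * (∑ i, x i ^ 2) / (2*σ^2)))

noncomputable def gdens (n k : ℕ) (σ ε : ℝ) (P : MvPolynomial (Fin n) ℝ) (a : Fin n → ℝ) (x : ℝ) : ℝ :=
  (2*π)^(-(1:ℝ)/2) * (Real.exp (-x^2/2) +
    (-1)^k * ε * MvPolynomial.eval a P * (σ^(2*k+1))⁻¹ * hermiteR (2*k) (x/σ) * Real.exp (-x^2/(2*σ^2)))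

noncomputable def hermG (m : ℕ) (x : ℝ) : ℝ := hermiteR m x * Real.exp (-x^2/2)

lemma hermiteR_continuous (m : ℕ) : Continuous (hermiteR m) := by
  unfold hermiteR
  exact Polynomial.continuous_aeval _

lemma hermG_integrable (m : ℕ) : Integrable (hermG m) := by
  have h : ∀ p : Polynomial ℤ, Integrable (fun x : ℝ => Polynomial.aeval x p * Real.exp (-x^2/2)) := by
    intro p
    induction p using Polynomial.induction_on' with
    | add p q hp hq =>
      simp only [map_add, add_mul]
      exact hp.add hq
    | monomial j a =>
      have := (integrable_rpow_mul_exp_neg_mul_sq (b := 1/2) (by norm_num) (s := j)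
        (by have : (0:ℝ) ≤ j := Nat.cast_nonneg j
            linarith)).const_mul (a:ℝ)
      refine this.congr (Filter.Eventually.of_forall fun x => ?_)
      simp only [Polynomial.aeval_monomial, Real.rpow_natCast]
      rw [show -(1/2:ℝ) * x^2 = -x^2/2 by ring]
      simp [mul_assoc]
  exact h _

lemma hermG_hasDerivAt (m : ℕ) (x : ℝ) : HasDerivAt (hermG m) (-hermG (m+1) x) x := by
  have h1 : HasDerivAt (hermiteR m) (Polynomial.aeval x (Polynomial.derivative (Polynomial.hermite m))) x :=
    Polynomial.hasDerivAt_aeval _ _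
  have h2 : HasDerivAt (fun x : ℝ => Real.exp (-x^2/2)) (Real.exp (-x^2/2) * (-x)) x := by
    have : HasDerivAt (fun x : ℝ => -x^2/2) (-x) x := by
      have := ((hasDerivAt_pow 2 x).neg).div_const 2
      convert! this using 1
      simp
      ring
    exact this.exp
  have := h1.mul h2
  convert! this using 1
  simp only [hermG, hermiteR, Polynomial.hermite_succ, map_sub, map_mul, Polynomial.aeval_X]
  ring

lemma hermG_F_integrable (m : ℕ) (t : ℝ) :
    Integrable (fun x : ℝ => Complex.exp (Complex.I * (t * x : ℝ)) * (hermG m x : ℂ)) := by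
  refine (hermG_integrable m).ofReal.bdd_mul (c := 1) ?_ ?_
  · exact (by fun_prop : Continuous _).aestronglyMeasurable
  · refine Filter.Eventually.of_forall fun x => ?_
    rw [mul_comm, Complex.norm_exp_ofReal_mul_I]

lemma hermG_F (m : ℕ) (t : ℝ) :
    ∫ x : ℝ, Complex.exp (Complex.I * (t * x : ℝ)) * (hermG m x : ℂ)
      = (Real.sqrt (2*π) : ℂ) * (Complex.I * t)^m * Complex.exp ((-t^2/2 : ℝ)) := by
  induction m with
  | zero =>
    have := fourierIntegral_gaussian (b := 1/2) (by norm_num) (t : ℂ)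
    simp only [hermG, hermiteR, Polynomial.hermite_zero]
    convert! this using 1
    · congr 1
      ext x
      push_cast
      simp only [map_one, Complex.ofReal_one, one_mul]
      congr 1
      · ring_nf
      · ring_nf
    · rw [Real.sqrt_eq_rpow, Complex.ofReal_cpow (by positivity)]
      push_cast
      ring_nf
  | succ m ih =>
    have hu : ∀ x : ℝ, HasDerivAt (fun x : ℝ => Complex.exp (Complex.I * (t * x : ℝ)))
        (Complex.exp (Complex.I * (t * x : ℝ)) * (Complex.I * t)) x := by
      intro x
      have h1 : HasDerivAt (fun x : ℝ => Complex.I * ((t * x : ℝ) : ℂ)) (Complex.I * t) x := by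
        have := ((hasDerivAt_id x).const_mul t).ofReal_comp.const_mul Complex.I
        simpa using this
      exact h1.cexp
    have hv : ∀ x : ℝ, HasDerivAt (fun x : ℝ => (hermG m x : ℂ)) (-hermG (m+1) x : ℂ) x := by
      intro x
      have := (hermG_hasDerivAt m x).ofReal_comp
      simpa using this
    have key := integral_mul_deriv_eq_deriv_mul_of_integrable (fun x _ => hu x) (fun x _ => hv x)
      (by
        have := (hermG_F_integrable (m+1) t).neg
        refine this.congr (Filter.Eventually.of_forall fun x => ?_)
        simp) (by
        have := (hermG_F_integrable m t).const_mul (Complex.I * t)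
        refine this.congr (Filter.Eventually.of_forall fun x => ?_)
        simp only [Pi.mul_apply]
        ring) (hermG_F_integrable m t)
    have e1 : ∀ x : ℝ, Complex.exp (Complex.I * (t * x : ℝ)) * (Complex.I * t) * (hermG m x : ℂ)
        = (Complex.I * t) * (Complex.exp (Complex.I * (t * x : ℝ)) * (hermG m x : ℂ)) := fun x => by ring
    simp only [mul_neg, e1] at key
    rw [integral_neg, integral_const_mul, ih] at key
    rw [neg_inj.mp key]
    ring

lemma hermGs_F_integrable (m : ℕ) (σ : ℝ) (hσ : 0 < σ) (t : ℝ) :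
    Integrable (fun x : ℝ => Complex.exp (Complex.I * (t * x : ℝ)) * (hermG m (x / σ) : ℂ)) := by
  have := (hermG_F_integrable m (t * σ)).comp_div hσ.ne'
  refine this.congr (Filter.Eventually.of_forall fun x => ?_)
  simp only
  rw [show t * σ * (x / σ) = t * x by field_simp]

lemma hermGs_F (m : ℕ) (σ : ℝ) (hσ : 0 < σ) (t : ℝ) :
    ∫ x : ℝ, Complex.exp (Complex.I * (t * x : ℝ)) * (hermG m (x / σ) : ℂ)
      = (σ * Real.sqrt (2*π) : ℝ) * ((Complex.I * σ)^m * (t:ℂ)^m) * ((Real.exp (-σ^2 * t^2/2) : ℝ) : ℂ) := by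
  have h := Measure.integral_comp_div
    (fun x : ℝ => Complex.exp (Complex.I * (t * σ * x : ℝ)) * (hermG m x : ℂ)) σ
  rw [hermG_F] at h
  rw [show (fun x : ℝ => Complex.exp (Complex.I * (t * x : ℝ)) * (hermG m (x / σ) : ℂ)) =
    (fun x : ℝ => Complex.exp (Complex.I * (t * σ * (x/σ) : ℝ)) * (hermG m (x/σ) : ℂ)) from ?_, h]
  · rw [abs_of_pos hσ, Complex.real_smul, ← Complex.ofReal_exp,
      show -(t*σ)^2/2 = -σ^2*t^2/2 by ring]
    push_cast
    ring
  · ext x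
    rw [show t * σ * (x / σ) = t * x by field_simp]

lemma endgame (k : ℕ) (hk : k ≠ 0) (B c D : ℝ) (hB : 0 < B) (hc : c ≠ 0)
    (h : ∀ x : ℝ, 0 ≤ x → |Real.exp (-B * x) + c * x^k| = Real.exp (D * x)) : False := by
  have e1 : ∀ x : ℝ, 0 ≤ x → Real.exp (-B * x) ≤ 1 := fun x hx =>
    Real.exp_le_one_iff.mpr (by nlinarith)
  rcases le_or_gt D 0 with hD | hD
  · have t1 : Filter.Tendsto (fun x : ℝ => |c| * x^k) Filter.atTop Filter.atTop :=
      (Filter.tendsto_pow_atTop hk).const_mul_atTop (abs_pos.mpr hc)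
    obtain ⟨x, hx1, hx0⟩ := ((t1.eventually_gt_atTop 2).and (Filter.eventually_ge_atTop 0)).exists
    have h1 : Real.exp (D * x) ≤ 1 := Real.exp_le_one_iff.mpr (by nlinarith)
    rw [← h x hx0] at h1
    have h2 : |c * x^k| = |c| * x^k := by rw [abs_mul, abs_of_nonneg (pow_nonneg hx0 k)]
    have h3 := e1 x hx0
    have h4 := Real.exp_pos (-B * x)
    have h5 := abs_le.mp h1
    have h6 : |c * x^k| ≤ 2 := abs_le.mpr ⟨by linarith, by linarith⟩
    linarith
  · have t1 : Filter.Tendsto (fun x : ℝ => (D^k * Real.exp (D*x) + (-D^k)) / (D*x)^k) Filter.atTop Filter.atTop :=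
      (Real.tendsto_mul_exp_add_div_pow_atTop (D^k) (-D^k) k (by positivity)).comp
        (Filter.tendsto_id.const_mul_atTop hD)
    obtain ⟨x, hx1, hx0⟩ := ((t1.eventually_gt_atTop |c|).and (Filter.eventually_gt_atTop 0)).exists
    rw [mul_pow, lt_div_iff₀ (by positivity)] at hx1
    have h2 : |c * x^k| = |c| * x^k := by rw [abs_mul, abs_of_nonneg (pow_nonneg hx0.le k)]
    have h3 := abs_add_le (Real.exp (-B * x)) (c * x^k)
    rw [h x hx0.le, h2, abs_of_pos (Real.exp_pos _)] at h3
    have h4 := e1 x hx0.le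
    have h5 : D^k * Real.exp (D*x) ≤ D^k * (1 + |c| * x^k) :=
      mul_le_mul_of_nonneg_left (by linarith) (by positivity)
    nlinarith

noncomputable def prodF {n : ℕ} (σ : ℝ) (t : Fin n → ℝ) (m : Fin n → ℕ) (x : Fin n → ℝ) : ℂ :=
  ∏ i, (Complex.exp (Complex.I * (t i * x i : ℝ)) * (hermG (m i) (x i / σ) : ℂ))

lemma prodF_integrable {n : ℕ} (σ : ℝ) (hσ : 0 < σ) (t : Fin n → ℝ) (m : Fin n → ℕ) :
    Integrable (prodF σ t m) := by
  unfold prodF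
  exact Integrable.fintype_prod_dep
    (f := fun i (y : ℝ) => Complex.exp (Complex.I * (t i * y : ℝ)) * (hermG (m i) (y / σ) : ℂ))
    (fun i => hermGs_F_integrable (m i) σ hσ (t i))

lemma prodF_integral {n : ℕ} (σ : ℝ) (hσ : 0 < σ) (t : Fin n → ℝ) (m : Fin n → ℕ) :
    ∫ x, prodF σ t m x = ((σ * Real.sqrt (2*π) : ℝ) : ℂ)^n * (Complex.I * σ)^(∑ i, m i) *
      (∏ i, (t i : ℂ)^(m i)) * ((Real.exp (-σ^2 * (∑ i, t i^2)/2) : ℝ) : ℂ) := by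
  unfold prodF
  rw [integral_fintype_prod_volume_eq_prod
    (f := fun i (y : ℝ) => Complex.exp (Complex.I * (t i * y : ℝ)) * (hermG (m i) (y / σ) : ℂ))]
  simp_rw [hermGs_F _ σ hσ]
  rw [Finset.prod_mul_distrib, Finset.prod_mul_distrib, Finset.prod_mul_distrib,
    Finset.prod_const, Finset.prod_pow_eq_pow_sum, Finset.card_univ, Fintype.card_fin,
    ← Complex.ofReal_prod Finset.univ (fun i => Real.exp (-σ^2 * t i^2/2)), ← Real.exp_sum, Finset.mul_sum, Finset.sum_div]
  ring

lemma prodF_eq {n : ℕ} (σ : ℝ) (t : Fin n → ℝ) (m : Fin n → ℕ) (x : Fin n → ℝ) :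
    prodF σ t m x = Complex.exp (Complex.I * ((∑ i, t i * x i : ℝ) : ℂ)) *
      ((∏ i, hermiteR (m i) (x i / σ) : ℝ) : ℂ) * ((Real.exp (-(∑ i, x i ^ 2)/(2*σ^2)) : ℝ) : ℂ) := by
  unfold prodF hermG
  rw [Finset.prod_mul_distrib, ← Complex.exp_sum, ← Finset.mul_sum, ← Complex.ofReal_sum,
    ← Complex.ofReal_prod, Finset.prod_mul_distrib, ← Real.exp_sum, Complex.ofReal_mul, mul_assoc]
  congr 4
  rw [← Finset.sum_neg_distrib, Finset.sum_div]
  refine Finset.sum_congr rfl fun i _ => ?_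
  rw [div_pow, ← neg_div, div_div, mul_comm 2]

lemma fdens_eq (n k : ℕ) (σ ε : ℝ) (hσ : 0 < σ) (P : MvPolynomial (Fin n) ℝ) (t x : Fin n → ℝ) :
    (fdens n k σ ε P x : ℂ) * Complex.exp (Complex.I * ((∑ i, t i * x i : ℝ) : ℂ)) =
      (((2*π)^(-(n:ℝ)/2) : ℝ) : ℂ) * prodF 1 t 0 x +
      (((2*π)^(-(n:ℝ)/2) * ((-1)^k * ε * (σ^(n+2*k))⁻¹) : ℝ) : ℂ) *
        ∑ m ∈ P.support, ((P.coeff m : ℝ) : ℂ) * prodF σ t m x := by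
  have h1 : Real.exp (-(∑ i, x i ^ 2)/(2*σ^2)) = Real.exp (-(∑ i, x i ^ 2)/2) *
      Real.exp (-(1-σ^2) * (∑ i, x i ^ 2) / (2*σ^2)) := by
    rw [← Real.exp_add]
    congr 1
    field_simp
    ring
  have h2 : ∑ m ∈ P.support, ((P.coeff m : ℝ) : ℂ) * prodF σ t m x =
      Complex.exp (Complex.I * ((∑ i, t i * x i : ℝ) : ℂ)) * (renorm P (fun i => x i / σ) : ℂ) *
      ((Real.exp (-(∑ i, x i ^ 2)/(2*σ^2)) : ℝ) : ℂ) := by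
    simp_rw [prodF_eq]
    unfold renorm
    generalize Complex.exp _ = E
    rw [Complex.ofReal_sum, Finset.mul_sum, Finset.sum_mul]
    refine Finset.sum_congr rfl fun m _ => ?_
    rw [Complex.ofReal_mul]
    ring
  rw [h2, prodF_eq, h1]
  have h3 : (∏ i, hermiteR ((0 : Fin n → ℕ) i) (x i / 1)) = 1 := by
    refine Finset.prod_eq_one fun i _ => ?_
    simp [hermiteR]
  rw [h3, fdens, one_pow, mul_one, Complex.ofReal_one, mul_one]
  simp only [Complex.ofReal_mul, Complex.ofReal_add, Complex.ofReal_one]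
  ring

lemma fdens_integral (n k : ℕ) (σ ε : ℝ) (hσ : 0 < σ) (P : MvPolynomial (Fin n) ℝ)
    (hP : P.IsHomogeneous (2 * k)) (t : Fin n → ℝ) :
    ∫ x, (fdens n k σ ε P x : ℂ) * Complex.exp (Complex.I * ((∑ i, t i * x i : ℝ) : ℂ)) =
      ((Real.exp (-(∑ i, t i^2)/2) +
        ε * Real.exp (-σ^2 * (∑ i, t i^2)/2) * MvPolynomial.eval t P : ℝ) : ℂ) := by
  simp_rw [fdens_eq n k σ ε hσ P t]
  have hi : ∀ m ∈ P.support, Integrable (fun x => ((P.coeff m : ℝ) : ℂ) * prodF σ t m x) :=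
    fun m _ => (prodF_integrable σ hσ t m).const_mul _
  rw [integral_add ((prodF_integrable 1 one_pos t 0).const_mul _)
    ((integrable_finsetSum _ hi).const_mul _), integral_const_mul, integral_const_mul,
    integral_finsetSum _ hi]
  simp_rw [integral_const_mul]
  have hC : (2*π)^(-(n:ℝ)/2) * (Real.sqrt (2*π))^n = 1 := by
    rw [Real.sqrt_eq_rpow, ← Real.rpow_natCast, ← Real.rpow_mul (by positivity),
      ← Real.rpow_add (by positivity)]
    convert Real.rpow_zero _ using 2
    ring
  have hs : ∑ m ∈ P.support, ((P.coeff m : ℝ) : ℂ) * ∫ x, prodF σ t m x =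
      ((σ * Real.sqrt (2*π) : ℝ) : ℂ)^n * (Complex.I * σ)^(2*k) *
      (MvPolynomial.eval t P : ℝ) * ((Real.exp (-σ^2 * (∑ i, t i^2)/2) : ℝ) : ℂ) := by
    rw [MvPolynomial.eval_eq', Complex.ofReal_sum, Finset.mul_sum, Finset.sum_mul]
    refine Finset.sum_congr rfl fun m hm => ?_
    have hd : ∑ i, m i = 2 * k := by
      have := hP (MvPolynomial.mem_support_iff.mp hm)
      rw [← this, Finsupp.weight_apply, Finsupp.sum_fintype] <;> simp
    rw [prodF_integral σ hσ, hd]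
    push_cast
    ring
  rw [hs, prodF_integral 1 one_pos]
  have hI : (Complex.I * σ)^(2*k) = (((-1)^k * σ^(2*k) : ℝ) : ℂ) := by
    rw [mul_pow, pow_mul, Complex.I_sq]
    push_cast
    ring
  rw [hI]
  simp only [Pi.zero_apply, pow_zero, Finset.sum_const_zero, Finset.prod_const_one, mul_one, one_mul,
    one_pow]
  simp only [← Complex.ofReal_mul, ← Complex.ofReal_pow, ← Complex.ofReal_add]
  rw [Complex.ofReal_inj]
  rw [← mul_assoc, hC, one_mul, neg_one_mul]
  congr 1
  have h1 : ((-1:ℝ)^k) * (-1)^k = 1 := by rw [← mul_pow]; norm_num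
  have h2 : (σ^(n+2*k))⁻¹ * (σ^n * σ^(2*k)) = 1 := by
    rw [← pow_add]; exact inv_mul_cancel₀ (by positivity)
  rw [mul_pow]
  generalize MvPolynomial.eval t P = p
  generalize Real.exp (-σ^2 * (∑ i, t i^2)/2) = e
  generalize ((-1:ℝ)^k) = w at *
  calc _ = ((2*π)^(-(n:ℝ)/2) * (Real.sqrt (2*π))^n) * (w * w) * ((σ^(n+2*k))⁻¹ * (σ^n * σ^(2*k))) * (ε * e * p) := by ring
    _ = _ := by rw [hC, h1, h2]; ring

lemma fdens_nonneg (n k : ℕ) (σ ε : ℝ) (hσ : 0 < σ) (P : MvPolynomial (Fin n) ℝ)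
    (hε : |ε| ≤ (Kconst n k σ P)⁻¹) (hε0 : ε ≠ 0) (x : Fin n → ℝ) : 0 ≤ fdens n k σ ε P x := by
  have hpos : 0 < |ε| := abs_pos.mpr hε0
  have hK : 0 < Kconst n k σ P := inv_pos.mp (hpos.trans_le hε)
  have hb : BddAbove (Set.range fun x : Fin n → ℝ => (σ ^ (n + 2*k))⁻¹ * |renorm P x| *
      Real.exp (-(1 - σ^2) * (∑ i, x i ^ 2) / 2)) := by
    by_contra hcon
    have : Kconst n k σ P = 0 := Real.iSup_of_not_bddAbove hcon
    linarith
  have h1 := le_ciSup hb (fun i => x i / σ)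
  change _ ≤ Kconst n k σ P at h1
  have h2 : |ε| * Kconst n k σ P ≤ 1 := by
    rwa [← le_div_iff₀ hK, one_div]
  simp only at h1
  have h3 : -(1 - σ^2) * (∑ i, (x i / σ) ^ 2) / 2 = -(1-σ^2) * (∑ i, x i ^ 2) / (2*σ^2) := by
    simp_rw [div_pow]
    rw [← Finset.sum_div]
    field_simp
  rw [h3] at h1
  have h4 := mul_le_mul_of_nonneg_left h1 hpos.le
  unfold fdens
  refine mul_nonneg (by positivity) ?_
  have h5 : |(-1)^k * ε * (σ^(n+2*k))⁻¹ * renorm P (fun i => x i / σ) *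
      Real.exp (-(1-σ^2) * (∑ i, x i ^ 2) / (2*σ^2))| ≤ 1 := by
    rw [abs_mul, abs_mul, abs_mul, abs_mul, abs_pow, abs_neg, abs_one, one_pow, one_mul,
      abs_of_pos (Real.exp_pos _), abs_of_pos (show 0 < (σ^(n+2*k))⁻¹ by positivity)]
    calc _ = _ := by rw [mul_assoc, mul_assoc, ← mul_assoc (σ^(n+2*k))⁻¹]
      _ ≤ _ := h4.trans h2
  linarith [(abs_le.mp h5).1]

lemma fdens_continuous (n k : ℕ) (σ ε : ℝ) (P : MvPolynomial (Fin n) ℝ) :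
    Continuous (fdens n k σ ε P) := by
  have hr : Continuous (fun x : Fin n → ℝ => renorm P (fun i => x i / σ)) := by
    unfold renorm
    refine continuous_finsetSum _ fun m _ => continuous_const.mul ?_
    exact continuous_finsetProd _ fun i _ => (hermiteR_continuous _).comp (by fun_prop)
  unfold fdens
  fun_prop

/-- For ε ≠ 0, the probability measure μ with density f(·;ε,σ,P) is not Gaussian: its
characteristic function is not of the form t ↦ exp(i mᵀt − tᵀΣt/2) with Σ positive
semidefinite. -/
theorem stmt_7 (n k : ℕ) (σ : ℝ) (hσ0 : 0 < σ) (hσ1 : σ < 1)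
    (P : MvPolynomial (Fin n) ℝ) (hP : P.IsHomogeneous (2 * k)) (hP0 : P ≠ 0)
    (ε : ℝ) (hε : |ε| ≤ (Kconst n k σ P)⁻¹) (hε0 : ε ≠ 0)
    (μ : Measure (Fin n → ℝ))
    (hμ : μ = volume.withDensity (fun x => ENNReal.ofReal (fdens n k σ ε P x))) :
    ¬ ∃ (m : Fin n → ℝ) (S : Matrix (Fin n) (Fin n) ℝ), S.PosSemidef ∧
      ∀ t : Fin n → ℝ,
        (∫ x, Complex.exp (Complex.I * ((∑ i, t i * x i : ℝ) : ℂ)) ∂μ)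
          = Complex.exp (Complex.I * ((∑ i, m i * t i : ℝ) : ℂ)
              - ((∑ i, ∑ j, t i * S i j * t j : ℝ) : ℂ) / 2) := by
  rintro ⟨m, S, -, h⟩
  have hΦ : ∀ t : Fin n → ℝ, (∫ x, Complex.exp (Complex.I * ((∑ i, t i * x i : ℝ) : ℂ)) ∂μ) =
      ((Real.exp (-(∑ i, t i^2)/2) +
        ε * Real.exp (-σ^2 * (∑ i, t i^2)/2) * MvPolynomial.eval t P : ℝ) : ℂ) := by
    intro t
    rw [hμ, integral_withDensity_eq_integral_toReal_smul
      (fdens_continuous n k σ ε P).measurable.ennreal_ofReal (by simp),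
      ← fdens_integral n k σ ε hσ0 P hP t]
    refine integral_congr_ae (Filter.Eventually.of_forall fun x => ?_)
    simp only
    rw [ENNReal.toReal_ofReal (fdens_nonneg n k σ ε hσ0 P hε hε0 x), Complex.real_smul]
  have hnorm : ∀ t : Fin n → ℝ, |Real.exp (-(∑ i, t i^2)/2) +
        ε * Real.exp (-σ^2 * (∑ i, t i^2)/2) * MvPolynomial.eval t P| =
        Real.exp (-(∑ i, ∑ j, t i * S i j * t j)/2) := by
    intro t
    have := congrArg norm ((hΦ t).symm.trans (h t))
    rw [Complex.norm_real, Complex.norm_exp, Real.norm_eq_abs] at this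
    rw [this]
    congr 1
    rw [Complex.sub_re, Complex.I_mul_re, Complex.ofReal_im]
    rw [show (2:ℂ) = ((2:ℝ):ℂ) by norm_num, ← Complex.ofReal_div, Complex.ofReal_re]
    ring
  obtain ⟨a, ha⟩ : ∃ a : Fin n → ℝ, MvPolynomial.eval a P ≠ 0 := by
    by_contra hcon
    push Not at hcon
    exact hP0 (MvPolynomial.funext fun a => by rw [hcon a, map_zero])
  have hscale : ∀ s : ℝ, MvPolynomial.eval (fun i => s * a i) P = s^(2*k) * MvPolynomial.eval a P := by
    intro s
    rw [MvPolynomial.eval_eq', MvPolynomial.eval_eq', Finset.mul_sum]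
    refine Finset.sum_congr rfl fun m hm => ?_
    have hd : ∑ i, m i = 2 * k := by
      have := hP (MvPolynomial.mem_support_iff.mp hm)
      rw [← this, Finsupp.weight_apply, Finsupp.sum_fintype] <;> simp
    simp_rw [mul_pow]
    rw [Finset.prod_mul_distrib, Finset.prod_pow_eq_pow_sum, hd]
    ring
  by_cases hk : k = 0
  · -- total mass differs from one
    have h0 := (hΦ 0).symm.trans (h 0)
    have e0 : MvPolynomial.eval (0 : Fin n → ℝ) P = MvPolynomial.eval a P := by
      have := hscale 0
      simp only [hk, zero_mul, mul_zero, pow_zero, one_mul] at this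
      exact this
    rw [e0] at h0
    simp at h0
    exact h0.elim hε0 ha
  · have hA : 0 < ∑ i, a i^2 := by
      refine lt_of_le_of_ne (Finset.sum_nonneg fun i _ => sq_nonneg _) fun h0 => ?_
      have ha0 : ∀ i, a i = 0 := fun i => by
        have := (Finset.sum_eq_zero_iff_of_nonneg (fun i _ => sq_nonneg (a i))).mp h0.symm i
          (Finset.mem_univ i)
        exact pow_eq_zero_iff (two_ne_zero) |>.mp this
      have := hscale 0
      rw [zero_pow (by omega), zero_mul] at this
      apply ha
      rw [← this]
      congr 1
      congr 1
      ext i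
      simp [ha0 i]
    set A := ∑ i, a i^2
    set Q := ∑ i, ∑ j, a i * S i j * a j with hQ
    refine endgame k hk (A * (1-σ^2)/2) (ε * MvPolynomial.eval a P) ((σ^2*A - Q)/2)
      (by have : σ^2 < 1 := by nlinarith
          have : 0 < 1 - σ^2 := by linarith
          positivity) (mul_ne_zero hε0 ha) ?_
    intro x hx
    have h1 := hnorm (fun i => Real.sqrt x * a i)
    rw [hscale, pow_mul, Real.sq_sqrt hx] at h1
    have e1 : ∑ i, (Real.sqrt x * a i)^2 = x * A := by
      simp_rw [mul_pow, Real.sq_sqrt hx]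
      rw [Finset.mul_sum]
    have e2 : ∑ i, ∑ j, Real.sqrt x * a i * S i j * (Real.sqrt x * a j) = x * Q := by
      rw [hQ, Finset.mul_sum]
      refine Finset.sum_congr rfl fun i _ => ?_
      rw [Finset.mul_sum]
      refine Finset.sum_congr rfl fun j _ => ?_
      nth_rewrite 3 [← Real.mul_self_sqrt hx]
      ring
    rw [e1, e2] at h1
    have h2 : Real.exp ((σ^2*A - Q)/2 * x) = Real.exp (σ^2 * (x*A)/2) * Real.exp (-(x*Q)/2) := by
      rw [← Real.exp_add]; congr 1; ring
    have h3 : Real.exp (-(A * (1-σ^2)/2) * x) = Real.exp (σ^2 * (x*A)/2) * Real.exp (-(x*A)/2) := by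
      rw [← Real.exp_add]; congr 1; ring
    have h4 : Real.exp (σ^2 * (x*A)/2) * Real.exp (-σ^2 * (x*A)/2) = 1 := by
      rw [← Real.exp_add, ← Real.exp_zero]; congr 1; ring
    rw [h2, ← h1, h3]
    nth_rewrite 2 [← abs_of_pos (Real.exp_pos (σ^2 * (x*A)/2))]
    rw [← abs_mul]
    congr 1
    linear_combination (-ε * MvPolynomial.eval a P * x^k) * h4
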